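/- Let Q = 2n+2, m ≥ 1, 1 < p_i < ∞ with 0 < 1/p = Σ 1/p_i ≤ 1. Then ∫_{(ℝ^{2n+1})^m} (∏_{i=1}^m |y_i|_h^{-Q/p_i}) / (1 + |y₁|_h^Q + ⋯ + |y_m|_h^Q)^m dy₁⋯dy_m = (ω_Q/Q)^m · (∏_{i=1}^m Γ(1 - 1/p_i)) · Γ(1/p) / Γ(m), where ω_Q = Q·Ω_Q. -/

import Mathlib

open MeasureTheory Real Finset

/-- The Heisenberg norm on ℝ^{2n+1}. -/
noncomputable def hNorm (n : ℕ) (x : Fin (2 * n + 1) → ℝ) : ℝ :=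
  ((∑ i : Fin (2 * n), (x (Fin.castLE (by omega) i)) ^ 2) ^ 2 +
      (x ⟨2 * n, by omega⟩) ^ 2) ^ ((1 : ℝ) / 4)

/-- The Heisenberg dilations on ℝ^{2n+1}: the first 2n coordinates are scaled by r,
the last by r². -/
def hDil (n : ℕ) (r : ℝ) (x : Fin (2 * n + 1) → ℝ) : Fin (2 * n + 1) → ℝ :=
  fun i => if (i : ℕ) < 2 * n then r * x i else r ^ 2 * x i

/-!
Write `1 / (1 + ∑ uᵢ) ^ d` as a Gamma integral of `exp (-t (1 + ∑ uᵢ))` over `t > 0`. For fixed `t`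
the integrand splits into one-variable Gamma integrals, and integrating their product over `t` gives
a last Gamma integral; this is Dirichlet's integral over the orthant `uᵢ > 0`. The Heisenberg
dilations multiply Lebesgue measure by `r ^ Q`, so `x ↦ |x|_h ^ Q` carries Lebesgue measure on
`ℝ^(2n+1)` to `Ω_Q` times Lebesgue measure on `(0, ∞)`, and the Hilbert integral is the pullback of
Dirichlet's.
-/

open scoped NNReal

section DirichletIntegral

theorem integrableOn_rpow_mul_exp_neg_mul_Ioi {a t : ℝ} (ha : 0 < a) (ht : 0 < t) :
    IntegrableOn (fun u : ℝ => u ^ (a - 1) * exp (-(t * u))) (Set.Ioi 0) := by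
  simpa using integrableOn_rpow_mul_exp_neg_mul_rpow (show -1 < a - 1 by linarith) one_pos ht

variable {ι : Type*} [Fintype ι] {a : ι → ℝ} {d t : ℝ}

theorem integrableOn_prod_rpow_mul_exp_neg_mul (ha : ∀ i, 0 < a i) (ht : 0 < t) :
    IntegrableOn (fun u : ι → ℝ => ∏ i, u i ^ (a i - 1) * exp (-(t * u i)))
      (Set.univ.pi fun _ => Set.Ioi 0) := by
  rw [IntegrableOn, volume_pi, Measure.restrict_pi_pi]
  exact Integrable.fintype_prod_dep fun i => integrableOn_rpow_mul_exp_neg_mul_Ioi (ha i) ht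

theorem integral_prod_rpow_mul_exp_neg_mul (ha : ∀ i, 0 < a i) (ht : 0 < t) :
    ∫ u in Set.univ.pi fun _ : ι => Set.Ioi (0 : ℝ), ∏ i, u i ^ (a i - 1) * exp (-(t * u i)) =
      t ^ (-∑ i, a i) * ∏ i, Gamma (a i) := by
  rw [volume_pi, Measure.restrict_pi_pi,
    integral_fintype_prod_eq_prod fun i (x : ℝ) => x ^ (a i - 1) * exp (-(t * x)),
    ← sum_neg_distrib, rpow_sum_of_pos ht, ← prod_mul_distrib]
  refine prod_congr rfl fun i _ => ?_
  rw [integral_rpow_mul_exp_neg_mul_Ioi (ha i) ht, one_div, inv_rpow ht.le, rpow_neg ht.le]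

/-- The integrand in `(t, u)` from which Dirichlet's integral is obtained by integrating over `t`
and `u` in either order; `d` is the exponent of the denominator and `a i - 1` that of `u i`. -/
noncomputable def dirichletKernel (d : ℝ) (a : ι → ℝ) (t : ℝ) (u : ι → ℝ) : ℝ :=
  t ^ (d - 1) * exp (-t) * ∏ i, u i ^ (a i - 1) * exp (-(t * u i))

theorem dirichletKernel_nonneg {u : ι → ℝ} (ht : 0 ≤ t) (hu : ∀ i, 0 ≤ u i) :
    0 ≤ dirichletKernel d a t u :=
  mul_nonneg (by positivity) <|
    prod_nonneg fun i _ => mul_nonneg (rpow_nonneg (hu i) _) (exp_pos _).le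

theorem measurable_uncurry_dirichletKernel :
    Measurable (Function.uncurry (dirichletKernel d a)) := by
  unfold Function.uncurry dirichletKernel
  fun_prop

theorem integral_dirichletKernel_left {u : ι → ℝ} (hd : 0 < d) (hu : 0 < 1 + ∑ i, u i) :
    ∫ t in Set.Ioi 0, dirichletKernel d a t u =
      Gamma d * ((∏ i, u i ^ (a i - 1)) / (1 + ∑ i, u i) ^ d) := by
  have split (t : ℝ) : dirichletKernel d a t u =
      (∏ i, u i ^ (a i - 1)) * (t ^ (d - 1) * exp (-((1 + ∑ i, u i) * t))) := by
    have exp_split : exp (-((1 + ∑ i, u i) * t)) = exp (-t) * ∏ i, exp (-(t * u i)) := by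
      rw [← exp_sum, ← exp_add, sum_neg_distrib, ← mul_sum]
      ring_nf
    rw [dirichletKernel, prod_mul_distrib, exp_split]
    ring
  simp_rw [split]
  rw [integral_const_mul, integral_rpow_mul_exp_neg_mul_Ioi hd hu, one_div, inv_rpow hu.le]
  ring

theorem integral_dirichletKernel_right (ha : ∀ i, 0 < a i) (ht : 0 < t) :
    ∫ u in Set.univ.pi fun _ => Set.Ioi 0, dirichletKernel d a t u =
      (∏ i, Gamma (a i)) * (exp (-t) * t ^ (d - ∑ i, a i - 1)) := by
  simp_rw [dirichletKernel]
  rw [integral_const_mul, integral_prod_rpow_mul_exp_neg_mul ha ht,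
    show d - ∑ i, a i - 1 = d - 1 + -∑ i, a i by ring, rpow_add ht]
  ring

theorem integrable_dirichletKernel (ha : ∀ i, 0 < a i) (hd : ∑ i, a i < d) :
    Integrable (Function.uncurry (dirichletKernel d a))
      ((volume.restrict (Set.Ioi 0)).prod
        (volume.restrict (Set.univ.pi fun _ => Set.Ioi 0))) := by
  rw [integrable_prod_iff measurable_uncurry_dirichletKernel.aestronglyMeasurable]
  constructor
  · filter_upwards [ae_restrict_mem measurableSet_Ioi] with t ht
    exact (integrableOn_prod_rpow_mul_exp_neg_mul ha ht).const_mul (t ^ (d - 1) * exp (-t))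
  · have norm_integral : ∀ t ∈ Set.Ioi (0 : ℝ),
        (∏ i, Gamma (a i)) * (exp (-t) * t ^ (d - ∑ i, a i - 1)) =
          ∫ u in Set.univ.pi fun _ => Set.Ioi 0, ‖dirichletKernel d a t u‖ := fun t ht => by
      rw [← integral_dirichletKernel_right ha ht]
      refine setIntegral_congr_fun (.univ_pi fun _ => measurableSet_Ioi) fun u hu => ?_
      exact (norm_of_nonneg <|
        dirichletKernel_nonneg (le_of_lt ht) fun i => le_of_lt (hu i trivial)).symm
    exact IntegrableOn.congr_fun
      ((GammaIntegral_convergent (sub_pos.2 hd)).const_mul _)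
      norm_integral measurableSet_Ioi

theorem integral_prod_rpow_div_one_add_sum_rpow (ha : ∀ i, 0 < a i) (hd : ∑ i, a i < d) :
    ∫ u in Set.univ.pi fun _ : ι => Set.Ioi (0 : ℝ),
        (∏ i, u i ^ (a i - 1)) / (1 + ∑ i, u i) ^ d =
      (∏ i, Gamma (a i)) * Gamma (d - ∑ i, a i) / Gamma d := by
  have hd0 : 0 < d := (sum_nonneg fun i _ => (ha i).le).trans_lt hd
  rw [eq_div_iff (Gamma_pos_of_pos hd0).ne', mul_comm]
  calc
    _ = ∫ u in Set.univ.pi fun _ => Set.Ioi 0, ∫ t in Set.Ioi 0, dirichletKernel d a t u := by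
      rw [← integral_const_mul]
      refine setIntegral_congr_fun (.univ_pi fun _ => measurableSet_Ioi) fun u hu => ?_
      have hu0 : 0 ≤ ∑ i, u i := sum_nonneg fun i _ => le_of_lt (hu i trivial)
      exact (integral_dirichletKernel_left hd0 (by positivity)).symm
    _ = ∫ t in Set.Ioi 0, ∫ u in Set.univ.pi fun _ => Set.Ioi 0, dirichletKernel d a t u :=
      (integral_integral_swap (integrable_dirichletKernel ha hd)).symm
    _ = ∫ t in Set.Ioi 0, (∏ i, Gamma (a i)) * (exp (-t) * t ^ (d - ∑ i, a i - 1)) :=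
      setIntegral_congr_fun measurableSet_Ioi fun t ht => integral_dirichletKernel_right ha ht
    _ = _ := by
      rw [integral_const_mul, Gamma_eq_integral (sub_pos.2 hd)]

end DirichletIntegral

section Pushforward

theorem eq_smul_restrict_Ioi_of_measure_Iio {ν : Measure ℝ} {c : ℝ≥0}
    (h : ∀ b, ν (Set.Iio b) = ENNReal.ofReal b * c) : ν = c • volume.restrict (Set.Ioi 0) := by
  refine Measure.ext_of_generateFrom_of_iUnion (Set.range Set.Iio) (fun k : ℕ => Set.Iio (k : ℝ))
    (BorelSpace.measurable_eq.trans (borel_eq_generateFrom_Iio ℝ)) isPiSystem_Iio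
    (Set.iUnion_eq_univ_iff.2 exists_nat_gt) (fun k => ⟨k, rfl⟩)
    (fun k => by simp [h, ENNReal.mul_eq_top]) ?_
  rintro _ ⟨b, rfl⟩
  rw [h, Measure.smul_apply, Measure.restrict_apply measurableSet_Iio, Set.Iio_inter_Ioi,
    Real.volume_Ioo, sub_zero, ENNReal.smul_def, smul_eq_mul, mul_comm]

theorem map_rpow_eq_smul_restrict_Ioi {E : Type*} [MeasurableSpace E] {μ : Measure E} {N : E → ℝ}
    {Q : ℝ} {c : ℝ≥0} (hQ : 0 < Q) (hN : Measurable N) (hN0 : ∀ x, 0 ≤ N x)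
    (hball : ∀ r > 0, μ {x | N x < r} = ENNReal.ofReal (r ^ Q) * c) :
    μ.map (fun x => N x ^ Q) = c • volume.restrict (Set.Ioi 0) := by
  refine eq_smul_restrict_Ioi_of_measure_Iio fun b => ?_
  rw [Measure.map_apply (hN.pow_const Q) measurableSet_Iio]
  rcases le_or_gt b 0 with hb | hb
  · have sublevel_empty : (fun x => N x ^ Q) ⁻¹' Set.Iio b = ∅ :=
      Set.eq_empty_of_forall_notMem fun x hx => (hb.trans (rpow_nonneg (hN0 x) Q)).not_gt hx
    simp [sublevel_empty, ENNReal.ofReal_of_nonpos hb]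
  · have sublevel_ball : (fun x => N x ^ Q) ⁻¹' Set.Iio b = {x | N x < b ^ Q⁻¹} :=
      Set.ext fun x => (lt_rpow_inv_iff_of_pos (hN0 x) hb.le hQ).symm
    rw [sublevel_ball, hball _ (rpow_pos_of_pos hb _), rpow_inv_rpow hb.le hQ.ne']

theorem pi_nnreal_smul {ι : Type*} [Fintype ι] {E : ι → Type*} [∀ i, MeasurableSpace (E i)]
    (c : ι → ℝ≥0) (μ : ∀ i, Measure (E i)) [∀ i, SigmaFinite (μ i)] :
    Measure.pi (fun i => c i • μ i) = (∏ i, c i) • Measure.pi μ := by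
  refine Measure.pi_eq fun s _ => ?_
  simp only [Measure.smul_apply, ENNReal.smul_def, smul_eq_mul, Measure.pi_pi, prod_mul_distrib,
    ENNReal.ofNNReal_finsetProd]

theorem integral_pi_prod_rpow_div_one_add_sum_rpow {ι : Type*} [Fintype ι] {E : ι → Type*}
    [∀ i, MeasurableSpace (E i)] {μ : ∀ i, Measure (E i)} {f : ∀ i, E i → ℝ} {c : ι → ℝ≥0}
    {a : ι → ℝ} {d : ℝ} (hf : ∀ i, AEMeasurable (f i) (μ i))
    (hmap : ∀ i, (μ i).map (f i) = c i • volume.restrict (Set.Ioi 0))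
    (ha : ∀ i, 0 < a i) (hd : ∑ i, a i < d) :
    ∫ x, (∏ i, f i (x i) ^ (a i - 1)) / (1 + ∑ i, f i (x i)) ^ d ∂Measure.pi μ =
      (∏ i, (c i : ℝ)) * ((∏ i, Gamma (a i)) * Gamma (d - ∑ i, a i) / Gamma d) := by
  have hsigma (i : ι) : SigmaFinite ((μ i).map (f i)) := by rw [hmap]; infer_instance
  have map_pi : (Measure.pi μ).map (fun x i => f i (x i)) =
      (∏ i, c i) • volume.restrict (Set.univ.pi fun _ : ι => Set.Ioi 0) := by
    rw [Measure.pi_map_pi hf, volume_pi, Measure.restrict_pi_pi, ← pi_nnreal_smul]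
    simp_rw [hmap]
  have hf_pi : AEMeasurable (fun (x : ∀ i, E i) i => f i (x i)) (Measure.pi μ) :=
    have (i : ι) : SigmaFinite (μ i) := (hsigma i).of_map _ (hf i)
    aemeasurable_pi_lambda _ fun i =>
      (hf i).comp_quasiMeasurePreserving (Measure.quasiMeasurePreserving_eval μ i)
  rw [← integral_map (f := fun u : ι → ℝ => (∏ i, u i ^ (a i - 1)) / (1 + ∑ i, u i) ^ d) hf_pi
    (Measurable.aestronglyMeasurable (by fun_prop)), map_pi, integral_smul_nnreal_measure,
    integral_prod_rpow_div_one_add_sum_rpow ha hd, NNReal.smul_def, NNReal.coe_prod, smul_eq_mul]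

end Pushforward

section HeisenbergNorm

variable {n : ℕ}

theorem hNorm_nonneg (x : Fin (2 * n + 1) → ℝ) : 0 ≤ hNorm n x := by
  unfold hNorm
  positivity

theorem measurable_hNorm : Measurable (hNorm n) := by
  unfold hNorm
  fun_prop

theorem hNorm_pow_four (x : Fin (2 * n + 1) → ℝ) :
    hNorm n x ^ 4 = (∑ i : Fin (2 * n), x i.castSucc ^ 2) ^ 2 + x (Fin.last (2 * n)) ^ 2 := by
  rw [hNorm, ← rpow_natCast, ← rpow_mul (by positivity),
    show (1 : ℝ) / 4 * (4 : ℕ) = 1 by norm_num, rpow_one]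
  rfl

theorem hNorm_hDil (r : ℝ) (x : Fin (2 * n + 1) → ℝ) :
    hNorm n (hDil n r x) = |r| * hNorm n x := by
  rw [← pow_left_inj₀ (hNorm_nonneg _) (mul_nonneg (abs_nonneg r) (hNorm_nonneg x)) four_ne_zero,
    mul_pow, hNorm_pow_four, hNorm_pow_four, Even.pow_abs (by decide)]
  simp only [hDil, Fin.val_castSucc, Fin.is_lt, if_true, Fin.val_last, lt_irrefl, if_false,
    mul_pow, ← mul_sum]
  ring

theorem norm_le_one_of_hNorm_le_one {x : Fin (2 * n + 1) → ℝ} (hx : hNorm n x ≤ 1) : ‖x‖ ≤ 1 := by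
  have sum_sq_le : (∑ i : Fin (2 * n), x i.castSucc ^ 2) ^ 2 + x (Fin.last (2 * n)) ^ 2 ≤ 1 := by
    rw [← hNorm_pow_four]
    exact pow_le_one₀ (hNorm_nonneg x) hx
  have horizontal : ∑ i : Fin (2 * n), x i.castSucc ^ 2 ≤ 1 :=
    (sq_le_one_iff₀ (by positivity)).1 (by linarith [sq_nonneg (x (Fin.last (2 * n)))])
  rw [pi_norm_le_iff_of_nonneg zero_le_one]
  intro i
  rw [norm_eq_abs, ← sq_le_one_iff_abs_le_one]
  induction i using Fin.lastCases with
  | last => linarith [sq_nonneg (∑ i : Fin (2 * n), x i.castSucc ^ 2)]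
  | cast i =>
    exact (single_le_sum (f := fun i : Fin (2 * n) => x i.castSucc ^ 2)
      (fun _ _ => sq_nonneg _) (mem_univ i)).trans horizontal

theorem volume_hNorm_lt_one_ne_top : volume {x | hNorm n x < 1} ≠ ⊤ :=
  measure_ne_top_of_subset (s := Metric.closedBall 0 1)
    (fun _ hx => mem_closedBall_zero_iff.2 (norm_le_one_of_hNorm_le_one (le_of_lt hx)))
    measure_closedBall_lt_top.ne

theorem hDil_eq_toLin'_diagonal (r : ℝ) :
    hDil n r = (Matrix.diagonal fun i : Fin (2 * n + 1) =>
      if (i : ℕ) < 2 * n then r else r ^ 2).toLin' := by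
  ext x i
  simp only [hDil, Matrix.toLin'_apply, Matrix.mulVec_diagonal, ite_mul]

theorem volume_preimage_hDil {r : ℝ} (hr : r ≠ 0) (s : Set (Fin (2 * n + 1) → ℝ)) :
    volume (hDil n r ⁻¹' s) = ENNReal.ofReal ((r ^ (2 * n + 2))⁻¹) * volume s := by
  have hdet : LinearMap.det (Matrix.diagonal fun i : Fin (2 * n + 1) =>
      if (i : ℕ) < 2 * n then r else r ^ 2).toLin' = r ^ (2 * n + 2) := by
    rw [LinearMap.det_toLin', Matrix.det_diagonal, Fin.prod_univ_castSucc]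
    simp [pow_add]
  have hpos : 0 < r ^ (2 * n + 2) := Even.pow_pos (by simp [Nat.even_add]) hr
  rw [hDil_eq_toLin'_diagonal, Measure.addHaar_preimage_linearMap _ (hdet ▸ hpos.ne'), hdet,
    abs_of_pos (inv_pos.2 hpos)]

theorem volume_hNorm_lt {r : ℝ} (hr : 0 < r) :
    volume {x | hNorm n x < r} =
      ENNReal.ofReal (r ^ (2 * n + 2 : ℝ)) * volume {x | hNorm n x < 1} := by
  have ball_eq : {x | hNorm n x < r} = hDil n r⁻¹ ⁻¹' {x | hNorm n x < 1} := by
    ext x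
    simp only [Set.mem_preimage, Set.mem_ofPred_eq, hNorm_hDil, abs_of_pos (inv_pos.2 hr)]
    rw [inv_mul_lt_iff₀ hr, mul_one]
  rw [ball_eq, volume_preimage_hDil (inv_ne_zero hr.ne'), inv_pow, inv_inv]
  norm_cast

theorem map_hNorm_rpow :
    volume.map (fun x => hNorm n x ^ (2 * n + 2 : ℝ)) =
      (volume {x | hNorm n x < 1}).toNNReal • volume.restrict (Set.Ioi 0) :=
  map_rpow_eq_smul_restrict_Ioi (by positivity) measurable_hNorm hNorm_nonneg fun r hr => by
    rw [volume_hNorm_lt hr, ENNReal.coe_toNNReal volume_hNorm_lt_one_ne_top]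

end HeisenbergNorm

theorem hilbert_integral_general (n : ℕ) {ι : Type*} [Fintype ι] {s : ι → ℝ} {d : ℝ}
    (hs : ∀ i, s i < 1) (hd : ∑ i, (1 - s i) < d) :
    ∫ y : ι → (Fin (2 * n + 1) → ℝ),
        (∏ i, hNorm n (y i) ^ (-(2 * n + 2 : ℝ) * s i)) /
          (1 + ∑ i, hNorm n (y i) ^ (2 * n + 2 : ℝ)) ^ d =
      (volume {x | hNorm n x < 1}).toReal ^ Fintype.card ι *
        ((∏ i, Gamma (1 - s i)) * Gamma (d - ∑ i, (1 - s i)) / Gamma d) := by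
  have exponent (x : Fin (2 * n + 1) → ℝ) (i : ι) : hNorm n x ^ (-(2 * n + 2 : ℝ) * s i) =
      (hNorm n x ^ (2 * n + 2 : ℝ)) ^ (1 - s i - 1) := by
    rw [← rpow_mul (hNorm_nonneg x)]
    ring_nf
  simp_rw [exponent]
  rw [volume_pi, integral_pi_prod_rpow_div_one_add_sum_rpow
    (fun _ => (measurable_hNorm.pow_const _).aemeasurable) (fun _ => map_hNorm_rpow)
    (fun i => sub_pos.2 (hs i)) hd, prod_const, card_univ]
  rfl

/-- The m-linear Hilbert integral on the Heisenberg group: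
∫ (∏ |y_i|^{-Q/p_i}) / (1+|y₁|^Q+⋯+|y_m|^Q)^m = (ω_Q/Q)^m (∏ Γ(1-1/p_i)) Γ(1/p)/Γ(m),
where ω_Q = Q·Ω_Q. -/
theorem hilbert_integral (n m : ℕ) (hm : 1 ≤ m) (p : ℝ) (q : Fin m → ℝ)
    (hq : ∀ i, 1 < q i) (hp : 1 / p = ∑ i, 1 / q i) (hp0 : 0 < 1 / p) (hp1 : 1 / p ≤ 1) :
    ∫ y : Fin m → (Fin (2 * n + 1) → ℝ),
        (∏ i, hNorm n (y i) ^ (-((2 * n + 2 : ℝ)) / q i)) /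
          (1 + ∑ i, hNorm n (y i) ^ (2 * n + 2 : ℝ)) ^ m =
      (((2 * n + 2 : ℝ) * (volume {x : Fin (2 * n + 1) → ℝ | hNorm n x < 1}).toReal) /
            (2 * n + 2 : ℝ)) ^ m *
        ((∏ i, Real.Gamma (1 - 1 / q i)) * Real.Gamma (1 / p) / Real.Gamma m) := by
  have hd : ∑ i, (1 - 1 / q i) < m := by simpa [hp] using hp0
  rw [mul_div_cancel_left₀ _ (by positivity)]
  simpa [hp, div_eq_mul_inv] using
    hilbert_integral_general n (fun i => (div_lt_one (one_pos.trans (hq i))).2 (hq i)) hd
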